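/- arXiv:2205.06331 — 4 statements merged into one kernel-verified Lean document; each statement's English description precedes it below -/
import Mathlib

section
/- For every λ₂ ∈ (0,1) and every natural number q ≥ 1, there exists a real polynomial p of degree at most q such that p(1) = 1 and sup_{x ∈ [−λ₂, λ₂]} |p(x)| ≤ 2·exp(−q·√(2·log(1/λ₂))). (One may take p(x) = T_q(x/λ₂)/T_q(1/λ₂), where T_q is the degree-q Chebyshev polynomial of the first kind.) -/
/-!
On `[-r, r]` the polynomial `T_n(x / r) / T_n(1 / r)` is at most `1 / T_n(1 / r)` in absolute
value. Writing `1 / r = cosh t` with `t ≥ 0`, one has `T_n(1 / r) = cosh (n t) ≥ exp (n t) / 2`, and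
`cosh t ≤ exp (t ^ 2 / 2)` gives `t ≥ √(2 log (1 / r))`.
-/

open Polynomial Polynomial.Chebyshev

theorem exp_div_two_le_cosh (x : ℝ) : Real.exp x / 2 ≤ Real.cosh x := by
  rw [Real.cosh_eq]
  linarith [Real.exp_pos (-x)]

theorem sqrt_two_mul_log_le_arcosh {x : ℝ} (hx : 1 ≤ x) :
    √(2 * Real.log x) ≤ Real.arcosh x := by
  have hexp : x ≤ Real.exp (Real.arcosh x ^ 2 / 2) := by
    simpa only [Real.cosh_arcosh hx] using Real.cosh_le_exp_half_sq (Real.arcosh x)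
  have hlog : Real.log x ≤ Real.arcosh x ^ 2 / 2 :=
    (Real.log_le_iff_le_exp (by linarith)).2 hexp
  exact Real.sqrt_le_iff.2 ⟨Real.arcosh_nonneg hx, by linarith⟩

theorem exp_mul_arcosh_div_two_le_eval_T (n : ℤ) {x : ℝ} (hx : 1 ≤ x) :
    Real.exp (n * Real.arcosh x) / 2 ≤ (T ℝ n).eval x := by
  calc Real.exp (n * Real.arcosh x) / 2 ≤ Real.cosh (n * Real.arcosh x) := exp_div_two_le_cosh _
    _ = (T ℝ n).eval x := by rw [← T_real_cosh, Real.cosh_arcosh hx]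

theorem inv_eval_T_le_two_mul_exp (n : ℕ) {x : ℝ} (hx : 1 ≤ x) :
    ((T ℝ n).eval x)⁻¹ ≤ 2 * Real.exp (-(n : ℝ) * √(2 * Real.log x)) := by
  calc ((T ℝ n).eval x)⁻¹ ≤ (Real.exp (n * Real.arcosh x) / 2)⁻¹ := by
        gcongr
        exact exp_mul_arcosh_div_two_le_eval_T n hx
    _ = 2 * Real.exp (-(n * Real.arcosh x)) := by rw [inv_div, Real.exp_neg, div_eq_mul_inv]
    _ ≤ 2 * Real.exp (-(n * √(2 * Real.log x))) := by
        gcongr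
        exact sqrt_two_mul_log_le_arcosh hx
    _ = 2 * Real.exp (-(n : ℝ) * √(2 * Real.log x)) := by rw [neg_mul]

/-- The Chebyshev polynomial `T_n(x / r) / T_n(1 / r)`, adapted to the interval `[-r, r]` and
normalized to take the value `1` at `1`. It is the zero polynomial if `T_n(1 / r) = 0`. -/
noncomputable def normalizedChebyshev (K : Type*) [Field K] (n : ℤ) (r : K) : K[X] :=
  C ((T K n).eval r⁻¹)⁻¹ * (T K n).comp (C r⁻¹ * X)

namespace normalizedChebyshev

section Field

variable {K : Type*} [Field K]

theorem eval_eq (n : ℤ) (r x : K) :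
    (normalizedChebyshev K n r).eval x = ((T K n).eval r⁻¹)⁻¹ * (T K n).eval (r⁻¹ * x) := by
  simp only [normalizedChebyshev, eval_mul, eval_C, eval_comp, eval_X]

theorem eval_one {n : ℤ} {r : K} (h : (T K n).eval r⁻¹ ≠ 0) :
    (normalizedChebyshev K n r).eval 1 = 1 := by
  rw [eval_eq, mul_one, inv_mul_cancel₀ h]

theorem natDegree_le [NeZero (2 : K)] (n : ℤ) (r : K) :
    (normalizedChebyshev K n r).natDegree ≤ n.natAbs := by
  calc (normalizedChebyshev K n r).natDegree
      ≤ ((T K n).comp (C r⁻¹ * X)).natDegree := natDegree_C_mul_le _ _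
    _ ≤ (T K n).natDegree * (C r⁻¹ * X).natDegree := natDegree_comp_le
    _ ≤ (T K n).natDegree * 1 := by
        gcongr
        exact (natDegree_C_mul_le _ _).trans natDegree_X_le
    _ = n.natAbs := by rw [mul_one, natDegree_T]

end Field

theorem abs_eval_le (n : ℤ) {r x : ℝ} (hx : |x| ≤ r) :
    |(normalizedChebyshev ℝ n r).eval x| ≤ |(T ℝ n).eval r⁻¹|⁻¹ := by
  have hscaled : |r⁻¹ * x| ≤ 1 := by
    rw [inv_mul_eq_div, abs_div]
    exact div_le_one_of_le₀ (hx.trans (le_abs_self r)) (abs_nonneg r)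
  rw [eval_eq, abs_mul, abs_inv]
  exact mul_le_of_le_one_right (by positivity) (abs_eval_T_real_le_one n hscaled)

end normalizedChebyshev

/-- scalar polynomial-approximation core of Lemma 1 of the paper.
For every `λ₂ ∈ (0,1)` and every `q ≥ 1` there exists a real polynomial `p` of
degree at most `q` with `p 1 = 1` and
`sup_{x ∈ [-λ₂,λ₂]} |p x| ≤ 2 exp (-q √(2 log (1/λ₂)))`. -/
theorem stmt_2 (lam2 : ℝ) (hlam2_pos : 0 < lam2) (hlam2_lt : lam2 < 1)
    (q : ℕ) (hq : 1 ≤ q) :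
    ∃ p : Polynomial ℝ, p.natDegree ≤ q ∧ p.eval 1 = 1 ∧
      ∀ x ∈ Set.Icc (-lam2) lam2,
        |p.eval x| ≤ 2 * Real.exp (-(q : ℝ) * Real.sqrt (2 * Real.log (1 / lam2))) := by
  have hinv : 1 ≤ lam2⁻¹ := (one_le_inv₀ hlam2_pos).2 hlam2_lt.le
  have hT : 0 < (T ℝ q).eval lam2⁻¹ := one_pos.trans_le (one_le_eval_T_real q hinv)
  refine ⟨normalizedChebyshev ℝ q lam2, normalizedChebyshev.natDegree_le q lam2,
    normalizedChebyshev.eval_one hT.ne', fun x hx => ?_⟩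
  calc |(normalizedChebyshev ℝ q lam2).eval x|
      ≤ |(T ℝ q).eval lam2⁻¹|⁻¹ := normalizedChebyshev.abs_eval_le q (abs_le.2 hx)
    _ = ((T ℝ q).eval lam2⁻¹)⁻¹ := by rw [abs_of_pos hT]
    _ ≤ 2 * Real.exp (-(q : ℝ) * √(2 * Real.log (1 / lam2))) := by
        rw [one_div]
        exact inv_eval_T_le_two_mul_exp q hinv
end

section
/- Let λ > 0, L > 0, S > 0, and B ≥ 0. Let x_1, …, x_s ∈ ℝ^d with ‖x_k‖₂ ≤ L, let μ⋆ ∈ ℝ^d with ‖μ⋆‖₂ ≤ S, let η_1, …, η_s ∈ ℝ and e_1, …, e_s ∈ ℝ with Σ_{k=1}^s |e_k| ≤ 1, and set y_k = ⟨x_k, μ⋆⟩ + η_k + e_k. Define V = λI + Σ_{k=1}^s x_k x_kᵀ and μ̂ = V^{-1} Σ_{k=1}^s y_k x_k. If ‖Σ_{k=1}^s η_k x_k‖_{V^{-1}} ≤ B, then ‖μ̂ − μ⋆‖_V ≤ B + √λ·S + L/√λ. -/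
open Matrix

/-- The weighted norm `‖x‖_V = √(xᵀ V x)` associated with a matrix `V`. -/
noncomputable def wNorm {d : ℕ} (V : Matrix (Fin d) (Fin d) ℝ) (x : Fin d → ℝ) : ℝ :=
  Real.sqrt (x ⬝ᵥ V.mulVec x)

/-- The Euclidean norm `‖x‖₂ = √(xᵀ x)` on `ℝ^d`. -/
noncomputable def eucNorm {d : ℕ} (x : Fin d → ℝ) : ℝ :=
  Real.sqrt (x ⬝ᵥ x)

/-!
Multiplying the estimation error by `V` turns it into noise plus misspecification minus bias:
`V (μ̂ - μ) = ∑ η_k x_k + ∑ e_k x_k - Λ μ`, where `Λ` is the regularizer (`λ I` in `stmt_9`). As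
`‖w‖_V = ‖V w‖_{V⁻¹}`, the triangle inequality for `‖·‖_{V⁻¹}` splits the error into three terms.
Inversion reverses the Loewner order and `Λ ≤ V`, so the last two terms may be measured in
`‖·‖_{Λ⁻¹}`, which is `‖·‖₂ / √λ` for `Λ = λ I`.
-/

section LoewnerOrder

open scoped MatrixOrder

variable {n : Type*} [Fintype n] [DecidableEq n]

lemma dotProduct_inv_mulVec_anti {A V : Matrix n n ℝ} (hA : A.PosDef) (hAV : A ≤ V)
    (u : n → ℝ) : u ⬝ᵥ V⁻¹ *ᵥ u ≤ u ⬝ᵥ A⁻¹ *ᵥ u := by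
  have hV : V.PosDef := by simpa using hA.add_posSemidef (le_iff.mp hAV)
  set a := A⁻¹ *ᵥ u with ha
  set v := V⁻¹ *ᵥ u with hv
  have hAa : A *ᵥ a = u := by
    rw [ha, mulVec_mulVec, mul_nonsing_inv _ hA.det_pos.ne'.isUnit, one_mulVec]
  have hVv : V *ᵥ v = u := by
    rw [hv, mulVec_mulVec, mul_nonsing_inv _ hV.det_pos.ne'.isUnit, one_mulVec]
  have hAv : v ⬝ᵥ A *ᵥ v ≤ u ⬝ᵥ v := by
    have h := (le_iff.mp hAV).dotProduct_mulVec_nonneg v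
    rwa [star_trivial, sub_mulVec, dotProduct_sub, hVv, sub_nonneg, dotProduct_comm v u] at h
  have hsymm : a ⬝ᵥ A *ᵥ v = u ⬝ᵥ v := by
    rw [dotProduct_mulVec, ← mulVec_transpose, ← conjTranspose_eq_transpose_of_trivial,
      hA.isHermitian.eq, hAa]
  have hsq : 0 ≤ (a - v) ⬝ᵥ A *ᵥ (a - v) := by
    simpa only [star_trivial] using hA.posSemidef.dotProduct_mulVec_nonneg (a - v)
  simp only [mulVec_sub, dotProduct_sub, sub_dotProduct, hAa, hsymm] at hsq
  linarith [dotProduct_comm a u, dotProduct_comm v u]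

end LoewnerOrder

section WeightedNorm

open scoped MatrixOrder

variable {d : ℕ} {V : Matrix (Fin d) (Fin d) ℝ}

lemma wNorm_eq_norm (hV : V.PosSemidef) (x : Fin d → ℝ) :
    wNorm V x = (V.toSeminormedAddCommGroup hV).norm x :=
  congrArg Real.sqrt (dotProduct_comm x (V *ᵥ x))

lemma wNorm_add_le (hV : V.PosSemidef) (x y : Fin d → ℝ) :
    wNorm V (x + y) ≤ wNorm V x + wNorm V y := by
  simp only [wNorm_eq_norm hV]
  exact @norm_add_le _ (V.toSeminormedAddCommGroup hV).toSeminormedAddGroup x y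

lemma wNorm_sub_le (hV : V.PosSemidef) (x y : Fin d → ℝ) :
    wNorm V (x - y) ≤ wNorm V x + wNorm V y := by
  simp only [wNorm_eq_norm hV]
  exact @norm_sub_le _ (V.toSeminormedAddCommGroup hV).toSeminormedAddGroup x y

lemma wNorm_sum_le (hV : V.PosSemidef) {ι : Type*} (s : Finset ι) (x : ι → Fin d → ℝ) :
    wNorm V (∑ k ∈ s, x k) ≤ ∑ k ∈ s, wNorm V (x k) := by
  simp only [wNorm_eq_norm hV]
  exact @norm_sum_le _ _ (V.toSeminormedAddCommGroup hV) s x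

lemma wNorm_smul (V : Matrix (Fin d) (Fin d) ℝ) (c : ℝ) (x : Fin d → ℝ) :
    wNorm V (c • x) = |c| * wNorm V x := by
  rw [wNorm, mulVec_smul, dotProduct_smul, smul_dotProduct, smul_eq_mul, smul_eq_mul,
    ← mul_assoc, ← sq, Real.sqrt_mul (sq_nonneg c), Real.sqrt_sq_eq_abs, wNorm]

lemma wNorm_smul_one {c : ℝ} (hc : 0 ≤ c) (x : Fin d → ℝ) :
    wNorm (c • (1 : Matrix (Fin d) (Fin d) ℝ)) x = √c * eucNorm x := by
  rw [wNorm, smul_mulVec, one_mulVec, dotProduct_smul, smul_eq_mul, Real.sqrt_mul hc, eucNorm]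

lemma wNorm_inv_smul_one {c : ℝ} (hc : 0 < c) (x : Fin d → ℝ) :
    wNorm (c • (1 : Matrix (Fin d) (Fin d) ℝ))⁻¹ x = eucNorm x / √c := by
  have inv_smul_one : (c • (1 : Matrix (Fin d) (Fin d) ℝ))⁻¹ = c⁻¹ • 1 :=
    inv_eq_left_inv (by simp [smul_smul, hc.ne'])
  rw [inv_smul_one, wNorm_smul_one (inv_nonneg.mpr hc.le), Real.sqrt_inv, inv_mul_eq_div]

lemma wNorm_inv_mulVec (hV : IsUnit V.det) (x : Fin d → ℝ) :
    wNorm V⁻¹ (V *ᵥ x) = wNorm V x := by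
  rw [wNorm, mulVec_mulVec, nonsing_inv_mul _ hV, one_mulVec, dotProduct_comm, wNorm]

lemma wNorm_inv_anti {A : Matrix (Fin d) (Fin d) ℝ} (hA : A.PosDef) (hAV : A ≤ V)
    (x : Fin d → ℝ) : wNorm V⁻¹ x ≤ wNorm A⁻¹ x :=
  Real.sqrt_le_sqrt (dotProduct_inv_mulVec_anti hA hAV x)

end WeightedNorm

section RegularizedLeastSquares

open scoped MatrixOrder

variable {n ι R : Type*} [Fintype ι]

/-- The regularized Gram (design) matrix `Λ + ∑ x_k x_kᵀ` of the vectors `x_k`, for a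
matrix-valued regularizer `Λ`; ridge regression is the case `Λ = λ I`. -/
def regGram [NonUnitalNonAssocSemiring R] (Λ : Matrix n n R) (x : ι → n → R) : Matrix n n R :=
  Λ + ∑ k, vecMulVec (x k) (x k)

lemma regGram_mulVec [Fintype n] [CommSemiring R] (Λ : Matrix n n R) (x : ι → n → R)
    (μ : n → R) : regGram Λ x *ᵥ μ = Λ *ᵥ μ + ∑ k, (x k ⬝ᵥ μ) • x k := by
  simp only [regGram, add_mulVec, sum_mulVec, vecMulVec_mulVec, op_smul_eq_smul]

lemma le_regGram [Finite n] (Λ : Matrix n n ℝ) (x : ι → n → ℝ) : Λ ≤ regGram Λ x :=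
  le_add_of_nonneg_right <| Finset.sum_nonneg fun k _ =>
    (posSemidef_vecMulVec_self_star (x k)).nonneg

lemma posDef_regGram [Finite n] {Λ : Matrix n n ℝ} (hΛ : Λ.PosDef) (x : ι → n → ℝ) :
    (regGram Λ x).PosDef := by
  simpa using hΛ.add_posSemidef (le_iff.mp (le_regGram Λ x))

variable [Fintype n] [DecidableEq n] [CommRing R]

/-- The regularized least-squares estimator `μ̂ = V⁻¹ ∑ y_k x_k`, where `V = regGram Λ x`, for the
observations `y_k` at the design points `x_k`. It is meaningful only when `V` is invertible, since
`V⁻¹ = 0` otherwise. -/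
noncomputable def regLeastSquares (Λ : Matrix n n R) (x : ι → n → R) (y : ι → R) : n → R :=
  (regGram Λ x)⁻¹ *ᵥ ∑ k, y k • x k

lemma regGram_mulVec_regLeastSquares_sub {Λ : Matrix n n R} {x : ι → n → R}
    (hV : IsUnit (regGram Λ x).det) (μ : n → R) (ε : ι → R) :
    regGram Λ x *ᵥ (regLeastSquares Λ x (fun k => x k ⬝ᵥ μ + ε k) - μ) =
      ∑ k, ε k • x k - Λ *ᵥ μ := by
  rw [mulVec_sub, regLeastSquares, mulVec_mulVec, mul_nonsing_inv _ hV, one_mulVec,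
    regGram_mulVec]
  simp only [add_smul, Finset.sum_add_distrib]
  abel

end RegularizedLeastSquares

theorem stmt_9_general {d : ℕ} {ι : Type*} [Fintype ι] {Λ : Matrix (Fin d) (Fin d) ℝ}
    (hΛ : Λ.PosDef) (x : ι → Fin d → ℝ) (μ : Fin d → ℝ) (η e : ι → ℝ) :
    wNorm (regGram Λ x) (regLeastSquares Λ x (fun k => x k ⬝ᵥ μ + η k + e k) - μ) ≤
      wNorm (regGram Λ x)⁻¹ (∑ k, η k • x k) + wNorm Λ μ + ∑ k, |e k| * wNorm Λ⁻¹ (x k) := by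
  set V := regGram Λ x
  have hV : V.PosDef := posDef_regGram hΛ x
  have hVdet : IsUnit V.det := hV.det_pos.ne'.isUnit
  have inv_le (u : Fin d → ℝ) : wNorm V⁻¹ u ≤ wNorm Λ⁻¹ u := wNorm_inv_anti hΛ (le_regGram Λ x) u
  have bias : wNorm V⁻¹ (Λ *ᵥ μ) ≤ wNorm Λ μ :=
    (inv_le _).trans_eq (wNorm_inv_mulVec hΛ.det_pos.ne'.isUnit μ)
  have misspecification : wNorm V⁻¹ (∑ k, e k • x k) ≤ ∑ k, |e k| * wNorm Λ⁻¹ (x k) := by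
    refine (wNorm_sum_le hV.inv.posSemidef _ _).trans (Finset.sum_le_sum fun k _ => ?_)
    rw [wNorm_smul]
    gcongr
    exact inv_le (x k)
  simp only [add_assoc (_ ⬝ᵥ _)]
  calc wNorm V (regLeastSquares Λ x (fun k => x k ⬝ᵥ μ + (η k + e k)) - μ)
      = wNorm V⁻¹ (∑ k, η k • x k + ∑ k, e k • x k - Λ *ᵥ μ) := by
        rw [← wNorm_inv_mulVec hVdet, regGram_mulVec_regLeastSquares_sub hVdet]
        simp only [add_smul, Finset.sum_add_distrib]
    _ ≤ wNorm V⁻¹ (∑ k, η k • x k) + wNorm V⁻¹ (∑ k, e k • x k) + wNorm V⁻¹ (Λ *ᵥ μ) :=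
        (wNorm_sub_le hV.inv.posSemidef _ _).trans
          (by gcongr; exact wNorm_add_le hV.inv.posSemidef _ _)
    _ ≤ _ := by linarith

/-- deterministic core of Theorem 1 of the paper. With
`y_k = ⟨x_k, μ⋆⟩ + η_k + e_k`, `∑ |e_k| ≤ 1`, `‖x_k‖₂ ≤ L`, `‖μ⋆‖₂ ≤ S`,
`V = λ I + ∑ x_k x_kᵀ` and `μ̂ = V⁻¹ ∑ y_k x_k`, if the self-normalized noise term
satisfies `‖∑ η_k x_k‖_{V⁻¹} ≤ B`, then `‖μ̂ - μ⋆‖_V ≤ B + √λ S + L/√λ`. -/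
theorem stmt_9 {d s : ℕ} (lam L S B : ℝ)
    (hlam : 0 < lam) (hL : 0 < L) (hS : 0 < S) (hB : 0 ≤ B)
    (x : Fin s → Fin d → ℝ) (hx : ∀ k, eucNorm (x k) ≤ L)
    (mustar : Fin d → ℝ) (hmustar : eucNorm mustar ≤ S)
    (η : Fin s → ℝ) (e : Fin s → ℝ) (he : ∑ k, |e k| ≤ 1)
    (y : Fin s → ℝ) (hy : ∀ k, y k = x k ⬝ᵥ mustar + η k + e k)
    (V : Matrix (Fin d) (Fin d) ℝ)
    (hV : V = lam • (1 : Matrix (Fin d) (Fin d) ℝ) +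
      ∑ k, Matrix.vecMulVec (x k) (x k))
    (muhat : Fin d → ℝ) (hmuhat : muhat = V⁻¹.mulVec (∑ k, y k • x k))
    (hnoise : wNorm V⁻¹ (∑ k, η k • x k) ≤ B) :
    wNorm V (muhat - mustar) ≤ B + Real.sqrt lam * S + L / Real.sqrt lam := by
  obtain rfl : y = fun k => x k ⬝ᵥ mustar + η k + e k := funext hy
  subst hV hmuhat
  have misspecification : ∑ k, |e k| * (eucNorm (x k) / √lam) ≤ L / √lam :=
    calc ∑ k, |e k| * (eucNorm (x k) / √lam) ≤ ∑ k, |e k| * (L / √lam) := by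
          gcongr with k
          exact hx k
      _ = (∑ k, |e k|) * (L / √lam) := (Finset.sum_mul ..).symm
      _ ≤ L / √lam := mul_le_of_le_one_left (by positivity) he
  refine (stmt_9_general (PosDef.one.smul hlam) x mustar η e).trans ?_
  simp only [wNorm_smul_one hlam.le, wNorm_inv_smul_one hlam]
  gcongr
  exact hnoise
end

section
/- Let V be a symmetric positive definite d×d real matrix, μ̂ ∈ ℝ^d, β ≥ 0, and define the ellipsoid E = {v ∈ ℝ^d : ‖v − μ̂‖_V ≤ β}. Let D ⊆ ℝ^d be a set of actions, let μ⋆ ∈ E, and suppose x̃ ∈ D and μ̃ ∈ E satisfy ⟨x, θ⟩ ≤ ⟨x̃, μ̃⟩ for all x ∈ D and θ ∈ E (i.e., (x̃, μ̃) is optimistic). Then for every x⋆ ∈ D, ⟨x⋆, μ⋆⟩ − ⟨x̃, μ⋆⟩ ≤ 2β·‖x̃‖_{V^{-1}}. -/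
open Matrix

/-!
The pairing with `x` varies over the ellipsoid `E` by at most `2 β ‖x‖_{V⁻¹}`: for `μ, ν ∈ E` the
triangle inequality through the centre gives `‖μ - ν‖_V ≤ 2 β`, and `⟨x, μ - ν⟩` is the `V⁻¹`-inner
product of `x` with `V (μ - ν)`, whose `V⁻¹`-norm is `‖μ - ν‖_V`. Optimism replaces the value
`⟨x⋆, μ⋆⟩` of the competitor by `⟨x̃, μ̃⟩`, so the regret is at most such a variation, at `x = x̃`.
-/

section WeightedSeminorm

variable {ι : Type*} [Fintype ι] {V : Matrix ι ι ℝ}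

/-- The seminorm `x ↦ √(xᵀ V x)` of a positive semidefinite matrix `V`, bundled so that the triangle
inequality and Cauchy–Schwarz come from the semi-inner product `⟪x, y⟫ = xᵀ V y`. -/
noncomputable def weightedSeminorm (hV : V.PosSemidef) : Seminorm ℝ (ι → ℝ) :=
  letI := V.toSeminormedAddCommGroup hV
  letI := V.toInnerProductSpace hV
  normSeminorm ℝ (ι → ℝ)

theorem weightedSeminorm_apply (hV : V.PosSemidef) (x : ι → ℝ) :
    weightedSeminorm hV x = √(x ⬝ᵥ V *ᵥ x) :=
  congrArg Real.sqrt (dotProduct_comm (V *ᵥ x) x)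

theorem dotProduct_mulVec_le_weightedSeminorm_mul (hV : V.PosSemidef) (x y : ι → ℝ) :
    x ⬝ᵥ V *ᵥ y ≤ weightedSeminorm hV x * weightedSeminorm hV y := by
  let := V.toSeminormedAddCommGroup hV
  let := V.toInnerProductSpace hV
  rw [dotProduct_comm]
  exact real_inner_le_norm x y

variable [DecidableEq ι]

theorem inv_mulVec_mulVec_of_isUnit {R : Type*} [CommRing R] {A : Matrix ι ι R} (hA : IsUnit A)
    (x : ι → R) : A⁻¹ *ᵥ A *ᵥ x = x := by
  let := hA.invertible
  exact inv_mulVec_eq_vec rfl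

theorem weightedSeminorm_inv_mulVec (hV : V.PosDef) (u : ι → ℝ) :
    weightedSeminorm hV.inv.posSemidef (V *ᵥ u) = weightedSeminorm hV.posSemidef u := by
  rw [weightedSeminorm_apply, weightedSeminorm_apply,
    inv_mulVec_mulVec_of_isUnit hV.isUnit, dotProduct_comm]

theorem dotProduct_le_weightedSeminorm_inv_mul (hV : V.PosDef) (x u : ι → ℝ) :
    x ⬝ᵥ u ≤ weightedSeminorm hV.inv.posSemidef x * weightedSeminorm hV.posSemidef u :=
  calc x ⬝ᵥ u = x ⬝ᵥ V⁻¹ *ᵥ V *ᵥ u := by rw [inv_mulVec_mulVec_of_isUnit hV.isUnit]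
    _ ≤ weightedSeminorm hV.inv.posSemidef x * weightedSeminorm hV.inv.posSemidef (V *ᵥ u) :=
        dotProduct_mulVec_le_weightedSeminorm_mul hV.inv.posSemidef x (V *ᵥ u)
    _ = weightedSeminorm hV.inv.posSemidef x * weightedSeminorm hV.posSemidef u := by
        rw [weightedSeminorm_inv_mulVec hV]

theorem dotProduct_sub_dotProduct_le_of_mem_closedBall (hV : V.PosDef) {c μ ν : ι → ℝ} {β : ℝ}
    (hμ : μ ∈ (weightedSeminorm hV.posSemidef).closedBall c β)
    (hν : ν ∈ (weightedSeminorm hV.posSemidef).closedBall c β) (x : ι → ℝ) :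
    x ⬝ᵥ μ - x ⬝ᵥ ν ≤ 2 * β * weightedSeminorm hV.inv.posSemidef x := by
  rw [Seminorm.mem_closedBall] at hμ hν
  have hdiam : weightedSeminorm hV.posSemidef (μ - ν) ≤ 2 * β :=
    calc weightedSeminorm hV.posSemidef (μ - ν)
        = weightedSeminorm hV.posSemidef ((μ - c) - (ν - c)) := by rw [sub_sub_sub_cancel_right]
      _ ≤ weightedSeminorm hV.posSemidef (μ - c) + weightedSeminorm hV.posSemidef (ν - c) :=
          map_sub_le_add _ _ _
      _ ≤ 2 * β := by linarith
  calc x ⬝ᵥ μ - x ⬝ᵥ ν = x ⬝ᵥ (μ - ν) := (dotProduct_sub x μ ν).symm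
    _ ≤ weightedSeminorm hV.inv.posSemidef x * weightedSeminorm hV.posSemidef (μ - ν) :=
        dotProduct_le_weightedSeminorm_inv_mul hV x (μ - ν)
    _ ≤ weightedSeminorm hV.inv.posSemidef x * (2 * β) := by gcongr
    _ = 2 * β * weightedSeminorm hV.inv.posSemidef x := mul_comm _ _

theorem stmt_12_general (hV : V.PosDef) {muhat mustar muTilde xstar xt : ι → ℝ} {β : ℝ}
    (hmustar : mustar ∈ (weightedSeminorm hV.posSemidef).closedBall muhat β)
    (hmuTilde : muTilde ∈ (weightedSeminorm hV.posSemidef).closedBall muhat β)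
    (hopt : xstar ⬝ᵥ mustar ≤ xt ⬝ᵥ muTilde) :
    xstar ⬝ᵥ mustar - xt ⬝ᵥ mustar ≤ 2 * β * weightedSeminorm hV.inv.posSemidef xt :=
  (sub_le_sub_right hopt _).trans
    (dotProduct_sub_dotProduct_le_of_mem_closedBall hV hmuTilde hmustar xt)

end WeightedSeminorm

theorem closedBall_weightedSeminorm_eq_setOf_wNorm_le {d : ℕ} {V : Matrix (Fin d) (Fin d) ℝ}
    (hV : V.PosSemidef) (c : Fin d → ℝ) (β : ℝ) :
    (weightedSeminorm hV).closedBall c β = {v | wNorm V (v - c) ≤ β} := by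
  ext v
  simp only [Seminorm.mem_closedBall, weightedSeminorm_apply, wNorm, Set.mem_ofPred_eq]

/-- instantaneous regret of the optimistic (LinUCB) rule, first step
of the exploration–exploitation term in Theorem 2 of the paper. If `μ⋆` lies in the
ellipsoid `E = {v : ‖v - μ̂‖_V ≤ β}` and `(x̃, μ̃) ∈ D × E` is optimistic, i.e.
`⟨x, θ⟩ ≤ ⟨x̃, μ̃⟩` for all `x ∈ D`, `θ ∈ E`, then for every `x⋆ ∈ D`,
`⟨x⋆, μ⋆⟩ - ⟨x̃, μ⋆⟩ ≤ 2 β ‖x̃‖_{V⁻¹}`. -/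
theorem stmt_12 {d : ℕ} (V : Matrix (Fin d) (Fin d) ℝ) (hV : V.PosDef)
    (muhat : Fin d → ℝ) (β : ℝ) (hβ : 0 ≤ β)
    (E : Set (Fin d → ℝ)) (hE : E = {v | wNorm V (v - muhat) ≤ β})
    (D : Set (Fin d → ℝ)) (mustar : Fin d → ℝ) (hmustar : mustar ∈ E)
    (xt : Fin d → ℝ) (hxt : xt ∈ D) (muTilde : Fin d → ℝ) (hmuTilde : muTilde ∈ E)
    (hopt : ∀ x ∈ D, ∀ θ ∈ E, x ⬝ᵥ θ ≤ xt ⬝ᵥ muTilde)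
    (xstar : Fin d → ℝ) (hxstar : xstar ∈ D) :
    xstar ⬝ᵥ mustar - xt ⬝ᵥ mustar ≤ 2 * β * wNorm V⁻¹ xt := by
  rw [hE, ← closedBall_weightedSeminorm_eq_setOf_wNorm_le hV.posSemidef] at hmustar hmuTilde hopt
  simpa only [wNorm, weightedSeminorm_apply] using
    stmt_12_general hV hmustar hmuTilde (hopt xstar hxstar mustar hmustar)
end

section
/- Let λ ≥ L² > 0, and let x_1, …, x_n ∈ ℝ^d with ‖x_k‖₂ ≤ L for all k. Define V_0 = λI and V_k = V_{k-1} + x_k x_kᵀ for k = 1, …, n. Then Σ_{k=1}^n ‖x_k‖²_{V_{k-1}^{-1}} ≤ 2·log(det(V_n)/λ^d) ≤ 2d·log(1 + nL²/(dλ)). -/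
open Matrix

/-!
By the matrix determinant lemma each rank-one update multiplies the determinant by `1 + wₖ`, where
`wₖ = xₖᵀ Vₖ⁻¹ xₖ`, so `log (det Vₙ / det V₀)` telescopes to `∑ log (1 + wₖ)`. As `Vₖ ≥ V₀`, we
have `wₖ ≤ xₖᵀ V₀⁻¹ xₖ = ‖xₖ‖² / λ ≤ 1`, and `w ≤ 2 log (1 + w)` on `[0, 1]` gives the first
inequality. The second is AM-GM for the eigenvalues of the whitened matrix `V₀^(-1/2) Vₙ V₀^(-1/2)`,
whose trace is `d + ∑ xₖᵀ V₀⁻¹ xₖ`.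
-/

theorem min_one_le_two_mul_log_one_add {w : ℝ} (hw : 0 ≤ w) :
    min 1 w ≤ 2 * Real.log (1 + w) := by
  have h_min : min 1 w ≤ 2 * (2 * w / (w + 2)) := by
    rw [← mul_div_assoc, le_div_iff₀ (by positivity)]
    rcases le_total 1 w with h | h
    · rw [min_eq_left h]
      linarith
    · rw [min_eq_right h]
      nlinarith
  linarith [Real.le_log_one_add_of_nonneg hw]

theorem prod_le_sum_div_card_pow {ι : Type*} (s : Finset ι) {z : ι → ℝ} (hz : ∀ i ∈ s, 0 ≤ z i) :
    ∏ i ∈ s, z i ≤ ((∑ i ∈ s, z i) / s.card) ^ s.card := by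
  rcases s.eq_empty_or_nonempty with rfl | hs
  · simp
  · have h_card : (0 : ℝ) < s.card := by exact_mod_cast hs.card_pos
    have h_amgm := Real.geom_mean_le_arith_mean s (fun _ ↦ 1) z (by simp) (by simpa) hz
    simp only [Real.rpow_one, Finset.sum_const, nsmul_eq_mul, mul_one, one_mul] at h_amgm
    rwa [Real.rpow_inv_le_iff_of_pos (Finset.prod_nonneg hz)
      (div_nonneg (Finset.sum_nonneg hz) h_card.le) h_card, Real.rpow_natCast] at h_amgm

section Matrices

open scoped MatrixOrder ComplexOrder

variable {ι : Type*} {V : ℕ → Matrix ι ι ℝ} {x : ℕ → ι → ℝ}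

theorem monotone_of_rankOne_updates [Finite ι]
    (hV : ∀ k, V (k + 1) = V k + vecMulVec (x k) (x k)) : Monotone V := by
  refine monotone_nat_of_le_succ fun k ↦ ?_
  rw [hV, le_add_iff_nonneg_right, nonneg_iff_posSemidef]
  simpa only [star_trivial] using posSemidef_vecMulVec_self_star (x k)

theorem posDef_of_rankOne_updates [Finite ι] (hV₀ : (V 0).PosDef)
    (hV : ∀ k, V (k + 1) = V k + vecMulVec (x k) (x k)) (n : ℕ) : (V n).PosDef := by
  simpa only [add_sub_cancel] using
    hV₀.add_posSemidef (le_iff.mp (monotone_of_rankOne_updates hV n.zero_le))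

variable [Fintype ι] [DecidableEq ι]

theorem det_add_vecMulVec {R : Type*} [CommRing R] {A : Matrix ι ι R} (hA : IsUnit A.det)
    (u v : ι → R) : (A + vecMulVec u v).det = A.det * (1 + v ⬝ᵥ A⁻¹ *ᵥ u) := by
  rw [vecMulVec_eq Unit, det_add_replicateCol_mul_replicateRow hA, det_unique (1 + _),
    Matrix.add_apply, one_apply_eq, Matrix.mul_assoc, ← replicateCol_mulVec,
    replicateRow_mul_replicateCol_apply]

-- `B - A` and `A⁻¹ - B⁻¹` are the two Schur complements of `[[B, 1], [1, A⁻¹]]`.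
theorem inv_le_inv_of_posDef {𝕜 : Type*} [RCLike 𝕜] {A B : Matrix ι ι 𝕜} (hA : A.PosDef)
    (hAB : A ≤ B) : B⁻¹ ≤ A⁻¹ := by
  have hB : B.PosDef := by simpa using hA.add_posSemidef (le_iff.mp hAB)
  have := hB.isUnit.invertible
  have := hA.inv.isUnit.invertible
  have h_schur₁ := PosDef.fromBlocks₁₁ (1 : Matrix ι ι 𝕜) A⁻¹ hB
  have h_schur₂ := PosDef.fromBlocks₂₂ B (1 : Matrix ι ι 𝕜) hA.inv
  simp only [conjTranspose_one, Matrix.one_mul, Matrix.mul_one,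
    nonsing_inv_nonsing_inv A hA.det_pos.ne'.isUnit] at h_schur₁ h_schur₂
  exact h_schur₁.mp (h_schur₂.mpr hAB)

theorem dotProduct_inv_mulVec_le {A B : Matrix ι ι ℝ} (hA : A.PosDef) (hAB : A ≤ B) (x : ι → ℝ) :
    x ⬝ᵥ B⁻¹ *ᵥ x ≤ x ⬝ᵥ A⁻¹ *ᵥ x := by
  have h_nonneg := (le_iff.mp (inv_le_inv_of_posDef hA hAB)).dotProduct_mulVec_nonneg x
  rwa [star_trivial, sub_mulVec, dotProduct_sub, sub_nonneg] at h_nonneg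

theorem dotProduct_inv_mulVec_nonneg {A : Matrix ι ι ℝ} (hA : A.PosSemidef) (x : ι → ℝ) :
    0 ≤ x ⬝ᵥ A⁻¹ *ᵥ x := by
  simpa only [star_trivial] using hA.inv.dotProduct_mulVec_nonneg x

theorem dotProduct_inv_smul_one_mulVec {K : Type*} [Field K] {c : K} (hc : c ≠ 0) (x : ι → K) :
    x ⬝ᵥ (c • (1 : Matrix ι ι K))⁻¹ *ᵥ x = x ⬝ᵥ x / c := by
  have h_inv : (c • (1 : Matrix ι ι K))⁻¹ = c⁻¹ • 1 := inv_eq_right_inv (by simp [hc])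
  rw [h_inv, smul_mulVec, one_mulVec, dotProduct_smul, smul_eq_mul, div_eq_inv_mul]

theorem det_le_trace_div_card_pow {A : Matrix ι ι ℝ} (hA : A.PosSemidef) :
    A.det ≤ (A.trace / Fintype.card ι) ^ Fintype.card ι := by
  rw [hA.isHermitian.det_eq_prod_eigenvalues, hA.isHermitian.trace_eq_sum_eigenvalues]
  exact prod_le_sum_div_card_pow Finset.univ fun i _ ↦ hA.eigenvalues_nonneg i

theorem det_mul_le_trace_mul_div_card_pow {A B : Matrix ι ι ℝ} (hA : A.PosSemidef)
    (hB : B.PosSemidef) :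
    (A * B).det ≤ ((A * B).trace / Fintype.card ι) ^ Fintype.card ι := by
  obtain ⟨C, rfl⟩ := CStarAlgebra.nonneg_iff_eq_star_mul_self.mp hA.nonneg
  have h_det : (star C * C * B).det = (C * B * Cᴴ).det := by
    simp only [star_eq_conjTranspose, det_mul]
    ring
  have h_trace : (star C * C * B).trace = (C * B * Cᴴ).trace := (trace_mul_cycle C B Cᴴ).symm
  rw [h_det, h_trace]
  exact det_le_trace_div_card_pow (hB.mul_mul_conjTranspose_same C)

theorem log_det_div_eq_sum_log (hV₀ : (V 0).PosDef)
    (hV : ∀ k, V (k + 1) = V k + vecMulVec (x k) (x k)) (n : ℕ) :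
    Real.log ((V n).det / (V 0).det) =
      ∑ k ∈ Finset.range n, Real.log (1 + x k ⬝ᵥ (V k)⁻¹ *ᵥ x k) := by
  have h_pos k : 0 < (V k).det := (posDef_of_rankOne_updates hV₀ hV k).det_pos
  have h_step k : Real.log (1 + x k ⬝ᵥ (V k)⁻¹ *ᵥ x k) =
      Real.log (V (k + 1)).det - Real.log (V k).det := by
    rw [← Real.log_div (h_pos _).ne' (h_pos _).ne', hV, det_add_vecMulVec (h_pos k).ne'.isUnit,
      mul_div_cancel_left₀ _ (h_pos k).ne']
  rw [Finset.sum_congr rfl fun k _ ↦ h_step k, Finset.sum_range_sub fun k ↦ Real.log (V k).det,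
    Real.log_div (h_pos n).ne' (h_pos 0).ne']

theorem sum_min_one_le_two_mul_log_det_div (hV₀ : (V 0).PosDef)
    (hV : ∀ k, V (k + 1) = V k + vecMulVec (x k) (x k)) (n : ℕ) :
    ∑ k ∈ Finset.range n, min 1 (x k ⬝ᵥ (V k)⁻¹ *ᵥ x k) ≤
      2 * Real.log ((V n).det / (V 0).det) := by
  rw [log_det_div_eq_sum_log hV₀ hV, Finset.mul_sum]
  exact Finset.sum_le_sum fun k _ ↦ min_one_le_two_mul_log_one_add <|
    dotProduct_inv_mulVec_nonneg (posDef_of_rankOne_updates hV₀ hV k).posSemidef _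

theorem trace_inv_mul_eq_card_add_sum {R : Type*} [CommRing R] {W : ℕ → Matrix ι ι R}
    {u v : ℕ → ι → R} (hW₀ : IsUnit (W 0).det)
    (hW : ∀ k, W (k + 1) = W k + vecMulVec (u k) (v k)) (n : ℕ) :
    ((W 0)⁻¹ * W n).trace =
      Fintype.card ι + ∑ k ∈ Finset.range n, v k ⬝ᵥ (W 0)⁻¹ *ᵥ u k := by
  induction n with
  | zero => simp [nonsing_inv_mul _ hW₀]
  | succ n ih =>
    rw [hW, Matrix.mul_add, trace_add, ih, mul_vecMulVec, trace_vecMulVec, dotProduct_comm,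
      Finset.sum_range_succ, add_assoc]

theorem log_det_div_le_card_mul_log (hV₀ : (V 0).PosDef)
    (hV : ∀ k, V (k + 1) = V k + vecMulVec (x k) (x k)) (n : ℕ) :
    Real.log ((V n).det / (V 0).det) ≤
      Fintype.card ι *
        Real.log (1 + (∑ k ∈ Finset.range n, x k ⬝ᵥ (V 0)⁻¹ *ᵥ x k) / Fintype.card ι) := by
  rcases isEmpty_or_nonempty ι with _ | _
  · simp
  have hVn := posDef_of_rankOne_updates hV₀ hV n
  have h_mean : ((V 0)⁻¹ * V n).trace / Fintype.card ι =
      1 + (∑ k ∈ Finset.range n, x k ⬝ᵥ (V 0)⁻¹ *ᵥ x k) / Fintype.card ι := by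
    rw [trace_inv_mul_eq_card_add_sum hV₀.det_pos.ne'.isUnit hV, add_div,
      div_self (Nat.cast_ne_zero.mpr Fintype.card_ne_zero)]
  have h_det : (V n).det / (V 0).det = ((V 0)⁻¹ * V n).det := by
    rw [det_mul, det_nonsing_inv, Ring.inverse_eq_inv', div_eq_inv_mul]
  rw [← h_mean, ← Real.log_pow]
  refine Real.log_le_log (div_pos hVn.det_pos hV₀.det_pos) ?_
  rw [h_det]
  exact det_mul_le_trace_mul_div_card_pow hV₀.inv.posSemidef hVn.posSemidef

theorem stmt_14_general {M : ℝ} {n : ℕ} (hV₀ : (V 0).PosDef)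
    (hV : ∀ k, V (k + 1) = V k + vecMulVec (x k) (x k)) (hM : M ≤ 1)
    (hx : ∀ k < n, x k ⬝ᵥ (V 0)⁻¹ *ᵥ x k ≤ M) :
    (∑ k ∈ Finset.range n, x k ⬝ᵥ (V k)⁻¹ *ᵥ x k) ≤ 2 * Real.log ((V n).det / (V 0).det) ∧
      2 * Real.log ((V n).det / (V 0).det) ≤
        2 * Fintype.card ι * Real.log (1 + n * M / Fintype.card ι) := by
  constructor
  · have h_width k (hk : k < n) : x k ⬝ᵥ (V k)⁻¹ *ᵥ x k ≤ 1 :=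
      (dotProduct_inv_mulVec_le hV₀ (monotone_of_rankOne_updates hV k.zero_le) _).trans
        ((hx k hk).trans hM)
    calc ∑ k ∈ Finset.range n, x k ⬝ᵥ (V k)⁻¹ *ᵥ x k
        = ∑ k ∈ Finset.range n, min 1 (x k ⬝ᵥ (V k)⁻¹ *ᵥ x k) :=
          Finset.sum_congr rfl fun k hk ↦ (min_eq_right (h_width k (Finset.mem_range.mp hk))).symm
      _ ≤ 2 * Real.log ((V n).det / (V 0).det) := sum_min_one_le_two_mul_log_det_div hV₀ hV n
  · have h_nonneg : 0 ≤ ∑ k ∈ Finset.range n, x k ⬝ᵥ (V 0)⁻¹ *ᵥ x k :=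
      Finset.sum_nonneg fun k _ ↦ dotProduct_inv_mulVec_nonneg hV₀.posSemidef _
    have h_sum : ∑ k ∈ Finset.range n, x k ⬝ᵥ (V 0)⁻¹ *ᵥ x k ≤ n * M := by
      simpa using Finset.sum_le_card_nsmul _ _ M fun k hk ↦ hx k (Finset.mem_range.mp hk)
    rw [mul_assoc]
    refine mul_le_mul_of_nonneg_left ((log_det_div_le_card_mul_log hV₀ hV n).trans ?_) zero_le_two
    gcongr

end Matrices

theorem dotProduct_self_le_sq_of_eucNorm_le {d : ℕ} {x : Fin d → ℝ} {L : ℝ} (hL : 0 ≤ L)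
    (hx : eucNorm x ≤ L) : x ⬝ᵥ x ≤ L ^ 2 :=
  (Real.sqrt_le_left hL).mp hx

/-- elliptical potential lemma used in the regret analysis of
Theorem 2 of the paper. With `λ ≥ L² > 0`, `‖x_k‖₂ ≤ L`, `V_0 = λI` and
`V_k = V_{k-1} + x_k x_kᵀ`, one has
`∑_{k=1}^n ‖x_k‖²_{V_{k-1}⁻¹} ≤ 2 log (det V_n / λ^d) ≤ 2 d log (1 + n L²/(d λ))`. -/
theorem stmt_14 {d : ℕ} (lam L : ℝ) (hL : 0 < L) (hlam : L ^ 2 ≤ lam)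
    (n : ℕ) (x : ℕ → Fin d → ℝ) (hx : ∀ k, 1 ≤ k → k ≤ n → eucNorm (x k) ≤ L)
    (V : ℕ → Matrix (Fin d) (Fin d) ℝ)
    (hV0 : V 0 = lam • (1 : Matrix (Fin d) (Fin d) ℝ))
    (hVk : ∀ k, V (k + 1) = V k + Matrix.vecMulVec (x (k + 1)) (x (k + 1))) :
    (∑ k ∈ Finset.range n, x (k + 1) ⬝ᵥ (V k)⁻¹.mulVec (x (k + 1))) ≤
        2 * Real.log ((V n).det / lam ^ d) ∧
      2 * Real.log ((V n).det / lam ^ d) ≤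
        2 * d * Real.log (1 + n * L ^ 2 / (d * lam)) := by
  have hlam_pos : 0 < lam := (pow_pos hL 2).trans_le hlam
  have hV0_posDef : (V 0).PosDef := hV0 ▸ PosDef.one.smul hlam_pos
  have hx_width : ∀ k < n, x (k + 1) ⬝ᵥ (V 0)⁻¹ *ᵥ x (k + 1) ≤ L ^ 2 / lam := fun k hk ↦ by
    rw [hV0, dotProduct_inv_smul_one_mulVec hlam_pos.ne']
    gcongr
    exact dotProduct_self_le_sq_of_eucNorm_le hL.le (hx (k + 1) k.succ_pos hk)
  have h_det : (V 0).det = lam ^ d := by simp [hV0]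
  have h_arg : n * (L ^ 2 / lam) / d = n * L ^ 2 / (d * lam) := by ring
  simpa only [h_det, h_arg, Fintype.card_fin] using
    stmt_14_general hV0_posDef hVk ((div_le_one hlam_pos).mpr hlam) hx_width
end
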